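/- arXiv:2605.18213 — 6 statements merged into one kernel-verified Lean document; each statement's English description precedes it below -/
import Mathlib

section
/- Let g be a Lie algebra over ℝ, let β ≠ 0 be a real number, and let a₊, a₋, b₊, b₋, c₀, c₁ be elements of g satisfying ⁅a₊, a₋⁆ = ⁅b₊, b₋⁆ and ⁅a₊, b₋⁆ = ⁅b₊, a₋⁆. Define j1₊ := a₊ + (1/(2β))·⁅b₊, c₀⁆, j1₋ := −a₋ + (1/(2β))·⁅b₋, c₀⁆, j2₊ := b₊ + (1/(2β))·⁅a₊, c₀⁆ + ⁅b₊, c₁⁆, and j2₋ := b₋ − (1/(2β))·⁅a₋, c₀⁆ + ⁅b₋, c₁⁆. Then the obstruction X⁽²⁾ vanishes: ⁅a₊, j1₋⁆ + ⁅a₋, j1₊⁆ + ⁅b₊, j2₋⁆ − ⁅b₋, j2₊⁆ + ⁅c₁, ⁅a₊, a₋⁆⁆ = 0. (This is the lightcone-component form of the identity X⁽²⁾ = [⋆A, J⁽¹⁾] + [B, J⁽²⁾] + ½[χ⁽¹⁾, [A, A]] = 0 used in the proof of the generalised BIZZ theorem.) -/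
/-- Vanishing of the obstruction `X⁽²⁾` in the proof of the generalised BIZZ theorem,
in lightcone components. -/
theorem X2_vanishes
    {g : Type*} [LieRing g] [LieAlgebra ℝ g]
    (β : ℝ) (hβ : β ≠ 0)
    (ap am bp bm c0 c1 : g)
    (h1 : ⁅ap, am⁆ = ⁅bp, bm⁆)
    (h2 : ⁅ap, bm⁆ = ⁅bp, am⁆)
    (j1p j1m j2p j2m : g)
    (hj1p : j1p = ap + (1 / (2 * β)) • ⁅bp, c0⁆)
    (hj1m : j1m = -am + (1 / (2 * β)) • ⁅bm, c0⁆)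
    (hj2p : j2p = bp + (1 / (2 * β)) • ⁅ap, c0⁆ + ⁅bp, c1⁆)
    (hj2m : j2m = bm - (1 / (2 * β)) • ⁅am, c0⁆ + ⁅bm, c1⁆) :
    ⁅ap, j1m⁆ + ⁅am, j1p⁆ + ⁅bp, j2m⁆ - ⁅bm, j2p⁆ + ⁅c1, ⁅ap, am⁆⁆ = 0 := by
  have e1 : ⁅ap, ⁅bm, c0⁆⁆ = ⁅bm, ⁅ap, c0⁆⁆ + ⁅bp, ⁅am, c0⁆⁆ - ⁅am, ⁅bp, c0⁆⁆ := by
    have h := congrArg (fun x => ⁅x, c0⁆) h2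
    simp only [lie_lie] at h
    rw [sub_eq_iff_eq_add] at h
    rw [h]; abel
  have e2 : ⁅c1, ⁅ap, am⁆⁆ = ⁅bm, ⁅bp, c1⁆⁆ - ⁅bp, ⁅bm, c1⁆⁆ := by
    rw [h1, ← lie_skew, lie_lie]; abel
  have e3 : ⁅am, ap⁆ = -⁅bp, bm⁆ := by rw [← lie_skew, h1]
  have e4 : ⁅bm, bp⁆ = -⁅bp, bm⁆ := by rw [← lie_skew]
  rw [e2]
  subst hj1p hj1m hj2p hj2m
  simp only [lie_add, lie_sub, lie_neg, lie_smul, e1, e3, e4, h1, smul_add, smul_sub]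
  abel
end

section
/- Let g be a Lie algebra over ℝ, let β ≠ 0 be a real number, and let a₊, a₋, b₊, b₋, c₀, c₁, c₂ be elements of g satisfying ⁅a₊, a₋⁆ = ⁅b₊, b₋⁆ and ⁅a₊, b₋⁆ = ⁅b₊, a₋⁆. Define j1₊ := a₊ + (1/(2β))·⁅b₊, c₀⁆, j1₋ := −a₋ + (1/(2β))·⁅b₋, c₀⁆, j2₊ := b₊ + (1/(2β))·⁅a₊, c₀⁆ + ⁅b₊, c₁⁆, j2₋ := b₋ − (1/(2β))·⁅a₋, c₀⁆ + ⁅b₋, c₁⁆, j3₊ := j1₊ + ⁅a₊, c₁⁆ + ⁅b₊, c₂⁆, and j3₋ := j1₋ − ⁅a₋, c₁⁆ + ⁅b₋, c₂⁆. Then the obstruction X⁽³⁾ vanishes: ⁅a₊, j2₋⁆ + ⁅a₋, j2₊⁆ + ⁅b₊, j3₋⁆ − ⁅b₋, j3₊⁆ + ⁅c₂, ⁅a₊, a₋⁆⁆ = 0. (This is the lightcone-component form of the identity X⁽³⁾ = [⋆A, J⁽²⁾] + [B, J⁽³⁾] + ½[χ⁽²⁾, [A, A]] = 0 used in the proof of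 the generalised BIZZ theorem.) -/
/-- Vanishing of the obstruction `X⁽³⁾` in the proof of the generalised BIZZ theorem,
in lightcone components. -/
theorem X3_vanishes
    {g : Type*} [LieRing g] [LieAlgebra ℝ g]
    (β : ℝ) (hβ : β ≠ 0)
    (ap am bp bm c0 c1 c2 : g)
    (h1 : ⁅ap, am⁆ = ⁅bp, bm⁆)
    (h2 : ⁅ap, bm⁆ = ⁅bp, am⁆)
    (j1p j1m j2p j2m j3p j3m : g)
    (hj1p : j1p = ap + (1 / (2 * β)) • ⁅bp, c0⁆)
    (hj1m : j1m = -am + (1 / (2 * β)) • ⁅bm, c0⁆)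
    (hj2p : j2p = bp + (1 / (2 * β)) • ⁅ap, c0⁆ + ⁅bp, c1⁆)
    (hj2m : j2m = bm - (1 / (2 * β)) • ⁅am, c0⁆ + ⁅bm, c1⁆)
    (hj3p : j3p = j1p + ⁅ap, c1⁆ + ⁅bp, c2⁆)
    (hj3m : j3m = j1m - ⁅am, c1⁆ + ⁅bm, c2⁆) :
    ⁅ap, j2m⁆ + ⁅am, j2p⁆ + ⁅bp, j3m⁆ - ⁅bm, j3p⁆ + ⁅c2, ⁅ap, am⁆⁆ = 0 := by
  have J : ∀ x y z : g, ⁅x, ⁅y, z⁆⁆ = ⁅⁅x, y⁆, z⁆ + ⁅y, ⁅x, z⁆⁆ := fun x y z => leibniz_lie x y z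
  have s1 : ⁅am, bp⁆ = -⁅bp, am⁆ := (lie_skew am bp).symm
  have s2 : ⁅bm, ap⁆ = -⁅ap, bm⁆ := (lie_skew bm ap).symm
  have s3 : ⁅c2, ⁅ap, am⁆⁆ = -⁅⁅ap, am⁆, c2⁆ := (lie_skew _ _).symm
  subst hj3p hj3m hj2p hj2m hj1p hj1m
  rw [s3]
  simp only [lie_add, lie_sub, lie_neg, lie_smul]
  rw [J ap am c0, J bp bm c0, J ap bm c1, J bp am c1, J bp bm c2, s1, s2, h1, h2]
  module
end

section
/- Let g be a Lie algebra over a commutative ring and let a₊, a₋, b₊, b₋ be elements of g satisfying ⁅a₊, a₋⁆ = ⁅b₊, b₋⁆ and ⁅a₊, b₋⁆ = ⁅b₊, a₋⁆. For elements p₊, p₋, q₊, q₋, u of g define X(p₊, p₋, q₊, q₋, u) := ⁅a₊, p₋⁆ + ⁅a₋, p₊⁆ + ⁅b₊, q₋⁆ − ⁅b₋, q₊⁆ + ⁅u, ⁅a₊, a₋⁆⁆. Given further elements c, c', c'' of g, define r₊ := p₊ + ⁅a₊, c⁆ + ⁅b₊, c'⁆, r₋ := p₋ − ⁅a₋, c⁆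 + ⁅b₋, c'⁆, s₊ := q₊ + ⁅a₊, c'⁆ + ⁅b₊, c''⁆, and s₋ := q₋ − ⁅a₋, c'⁆ + ⁅b₋, c''⁆. Then X(r₊, r₋, s₊, s₋, c'') = X(p₊, p₋, q₊, q₋, c). (This is the lightcone-component form of the recursion X⁽ⁿ⁺¹⁾ = X⁽ⁿ⁻¹⁾ satisfied by the conservation obstructions of the generalised BIZZ currents for n ≥ 3.) -/
/-- The recursion `X⁽ⁿ⁺¹⁾ = X⁽ⁿ⁻¹⁾` satisfied by the conservation obstructions of the
generalised BIZZ currents, in lightcone components. -/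
theorem X_recursion
    {R : Type*} [CommRing R] {g : Type*} [LieRing g] [LieAlgebra R g]
    (ap am bp bm : g)
    (h1 : ⁅ap, am⁆ = ⁅bp, bm⁆)
    (h2 : ⁅ap, bm⁆ = ⁅bp, am⁆)
    (X : g → g → g → g → g → g)
    (hX : ∀ pp pm qp qm u, X pp pm qp qm u =
      ⁅ap, pm⁆ + ⁅am, pp⁆ + ⁅bp, qm⁆ - ⁅bm, qp⁆ + ⁅u, ⁅ap, am⁆⁆)
    (pp pm qp qm c c' c'' : g)
    (rp rm sp sm : g)
    (hrp : rp = pp + ⁅ap, c⁆ + ⁅bp, c'⁆)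
    (hrm : rm = pm - ⁅am, c⁆ + ⁅bm, c'⁆)
    (hsp : sp = qp + ⁅ap, c'⁆ + ⁅bp, c''⁆)
    (hsm : sm = qm - ⁅am, c'⁆ + ⁅bm, c''⁆) :
    X rp rm sp sm c'' = X pp pm qp qm c := by
  have e1 := lie_lie ap am c
  have e2 := lie_lie ap bm c'
  have e3 := lie_lie bp am c'
  have e4 := lie_lie bp bm c''
  rw [h2, e3] at e2
  rw [← h1] at e4
  rw [hX, hX, hrp, hrm, hsp, hsm]
  simp only [lie_add, lie_sub]
  rw [← lie_skew c ⁅ap, am⁆, ← lie_skew c'' ⁅ap, am⁆, e1, e4]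
  rw [sub_eq_sub_iff_add_eq_add] at e2
  have e7 : ⁅bp, ⁅am, c'⁆⁆ = ⁅ap, ⁅bm, c'⁆⁆ + ⁅am, ⁅bp, c'⁆⁆ - ⁅bm, ⁅ap, c'⁆⁆ := by
    rw [← e2]; abel
  rw [e7]
  abel
end

section
/- Let g be a Lie algebra and let A₊, A₋, v₊, v₋, Δ₊, Δ₋ be elements of g satisfying the auxiliary-field equations of motion A₊ + v₊ + Δ₊ = 0 and A₋ + v₋ + Δ₋ = 0, together with the integrability conditions ⁅Δ₊, v₋⁆ = 0 and ⁅Δ₋, v₊⁆ = 0. Define B₊ := −(A₊ + 2·v₊) and B₋ := −(A₋ + 2·v₋). Then the fundamental commutator identities of auxiliary field sigma models hold: ⁅B₊, B₋⁆ = ⁅A₊, A₋⁆ and ⁅A₊, B₋⁆ = ⁅B₊, A₋⁆. -/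
/-- The fundamental commutator identities of auxiliary field sigma models follow from the
auxiliary-field equations of motion and the integrability conditions. -/
theorem afsm_commutator_identities
    {R : Type*} [CommRing R] {g : Type*} [LieRing g] [LieAlgebra R g]
    (Ap Am vp vm Dp Dm : g)
    (heomp : Ap + vp + Dp = 0)
    (heomm : Am + vm + Dm = 0)
    (hintp : ⁅Dp, vm⁆ = 0)
    (hintm : ⁅Dm, vp⁆ = 0) :
    ⁅-(Ap + 2 • vp), -(Am + 2 • vm)⁆ = ⁅Ap, Am⁆ ∧
    ⁅Ap, -(Am + 2 • vm)⁆ = ⁅-(Ap + 2 • vp), Am⁆ := by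
  have h1 : Ap = -(vp + Dp) := by
    rw [eq_neg_iff_add_eq_zero, ← add_assoc]; exact heomp
  have h2 : Am = -(vm + Dm) := by
    rw [eq_neg_iff_add_eq_zero, ← add_assoc]; exact heomm
  have h3 : ⁅vp, Dm⁆ = 0 := by rw [← lie_skew, hintm, neg_zero]
  have h4 : -(Ap + 2 • vp) = Dp - vp := by rw [h1]; abel
  have h5 : -(Am + 2 • vm) = Dm - vm := by rw [h2]; abel
  rw [h4, h5, h1, h2]
  simp only [neg_lie, lie_neg, add_lie, lie_add, sub_lie, lie_sub, hintp, h3]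
  constructor <;> abel
end

section
/- Let g be a Lie algebra over a commutative ring which decomposes as a direct sum of submodules g = h ⊕ m with ⁅h, h⁆ ⊆ h, ⁅h, m⁆ ⊆ m, and ⁅m, m⁆ ⊆ h. Let P : g → g be the linear projection onto m along h, let e : g → g be a Lie algebra automorphism, and set K := e ∘ P ∘ e⁻¹. Then for all x, y ∈ g: ⁅K x, K y⁆ = ⁅x, K y⁆ − K ⁅x, K y⁆. -/
/-- The fundamental bracket identity of the K-map of a symmetric-space sigma model:
`⁅Kx, Ky⁆ = ⁅x, Ky⁆ − K⁅x, Ky⁆`, where `K = e ∘ P ∘ e⁻¹` for a Lie algebra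
automorphism `e` and the projection `P` onto the coset part `m` along `h`. -/
theorem K_map_bracket
    {R : Type*} [CommRing R] {g : Type*} [LieRing g] [LieAlgebra R g]
    (h m : Submodule R g) (hcompl : IsCompl h m)
    (hhh : ∀ x ∈ h, ∀ y ∈ h, ⁅x, y⁆ ∈ h)
    (hhm : ∀ x ∈ h, ∀ y ∈ m, ⁅x, y⁆ ∈ m)
    (hmm : ∀ x ∈ m, ∀ y ∈ m, ⁅x, y⁆ ∈ h)
    (P : g →ₗ[R] g)
    (hPm : ∀ x ∈ m, P x = x) (hPh : ∀ x ∈ h, P x = 0)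
    (e : g ≃ₗ⁅R⁆ g) :
    ∀ x y : g,
      ⁅e (P (e.symm x)), e (P (e.symm y))⁆
        = ⁅x, e (P (e.symm y))⁆ - e (P (e.symm ⁅x, e (P (e.symm y))⁆)) := by
  have dec : ∀ a : g, ∃ u ∈ h, ∃ v ∈ m, u + v = a := fun a =>
    Submodule.mem_sup.1 (hcompl.sup_eq_top ▸ Submodule.mem_top)
  have key : ∀ a b : g, ⁅P a, P b⁆ = ⁅a, P b⁆ - P ⁅a, P b⁆ := by
    intro a b
    obtain ⟨u, hu, v, hv, rfl⟩ := dec a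
    obtain ⟨u', hu', v', hv', rfl⟩ := dec b
    have h1 := hPm _ (hhm u hu v' hv')
    have h2 := hPh _ (hmm v hv v' hv')
    simp only [map_add, hPm v hv, hPm v' hv', hPh u hu, hPh u' hu', zero_add, add_lie, h1, h2]
    abel
  intro x y
  obtain ⟨a, rfl⟩ : ∃ a, e a = x := ⟨e.symm x, e.apply_symm_apply x⟩
  obtain ⟨b, rfl⟩ : ∃ b, e b = y := ⟨e.symm y, e.apply_symm_apply y⟩
  simp only [LieEquiv.symm_apply_apply, ← LieEquiv.map_lie]
  rw [key a b]
  exact map_sub (e : g →ₗ⁅R⁆ g) _ _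
end

section
/- Let g be a Lie algebra over a commutative ring which decomposes as a direct sum of submodules g = h ⊕ m with ⁅h, h⁆ ⊆ h, ⁅h, m⁆ ⊆ m, and ⁅m, m⁆ ⊆ h. Let P : g → g be the linear projection onto m along h, let e : g → g be a Lie algebra automorphism, and set K := e ∘ P ∘ e⁻¹. If x ∈ g satisfies K x = x, then for all y ∈ g: ⁅x, y⁆ = K ⁅x, y⁆ + ⁅x, K y⁆ (i.e. the adjoint map of x satisfies ad_x = K ∘ ad_x + ad_x ∘ K). -/
/-- The algebraic relation `ad_x = K ∘ ad_x + ad_x ∘ K` between the K-map of a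
symmetric-space sigma model and any eigenvector `x` of `K` with eigenvalue `1`
(such as the Noether current `L`). -/
theorem K_map_ad_relation
    {R : Type*} [CommRing R] {g : Type*} [LieRing g] [LieAlgebra R g]
    (h m : Submodule R g) (hcompl : IsCompl h m)
    (hhh : ∀ x ∈ h, ∀ y ∈ h, ⁅x, y⁆ ∈ h)
    (hhm : ∀ x ∈ h, ∀ y ∈ m, ⁅x, y⁆ ∈ m)
    (hmm : ∀ x ∈ m, ∀ y ∈ m, ⁅x, y⁆ ∈ h)
    (P : g →ₗ[R] g)
    (hPm : ∀ x ∈ m, P x = x) (hPh : ∀ x ∈ h, P x = 0)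
    (e : g ≃ₗ⁅R⁆ g)
    (x : g) (hx : e (P (e.symm x)) = x) :
    ∀ y : g, ⁅x, y⁆ = e (P (e.symm ⁅x, y⁆)) + ⁅x, e (P (e.symm y))⁆ := by
  intro y
  have dec : ∀ z : g, ∃ a ∈ h, ∃ b ∈ m, a + b = z := fun z =>
    Submodule.mem_sup.1 (hcompl.sup_eq_top ▸ Submodule.mem_top)
  obtain ⟨u, rfl⟩ : ∃ u, e u = x := ⟨e.symm x, e.apply_symm_apply x⟩
  obtain ⟨v, rfl⟩ : ∃ v, e v = y := ⟨e.symm y, e.apply_symm_apply y⟩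
  have hu : P u = u := by
    rw [LieEquiv.symm_apply_apply] at hx
    exact e.injective hx
  have hum : u ∈ m := by
    obtain ⟨a, ha, b, hb, hab⟩ := dec u
    have h1 : P u = b := by rw [← hab, map_add, hPh a ha, hPm b hb, zero_add]
    rw [← hu, h1]
    exact hb
  obtain ⟨a, ha, b, hb, rfl⟩ := dec v
  have h1 : ⁅u, a⁆ ∈ m := by
    rw [← lie_skew]
    exact m.neg_mem (hhm a ha u hum)
  have h2 : P (a + b) = b := by rw [map_add, hPh a ha, hPm b hb, zero_add]
  have h3 : P ⁅u, a + b⁆ = ⁅u, a⁆ := by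
    rw [lie_add, map_add, hPm _ h1, hPh _ (hmm u hum b hb), add_zero]
  rw [← LieEquiv.map_lie, LieEquiv.symm_apply_apply, LieEquiv.symm_apply_apply, h2, h3,
    ← LieEquiv.map_lie, lie_add]
  exact map_add e.toLinearEquiv _ _
end
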